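/- Let A ∈ ℂ^{m×n} have full column rank and let S ∈ ℂ^{d×m} be a subspace embedding for A with distortion η ∈ [0,1). Let SA = UΣV* be an (economy-size) singular value decomposition of SA, set P := VΣ⁻¹, and let v₀ := P e_n / ‖P e_n‖ where e_n is the n-th standard basis vector (so v₀ is a unit vector). Then ‖A v₀‖² ≤ ((1+η)/(1−η)) · σ_min(A)², where σ_min(A) is the smallest singular value of A. -/

import Mathlib

/-!
Write `k` for the last index. Since `U` has orthonormal columns, `‖SAu‖ = ‖Σ Vᴴu‖`
(`norm_mulE_svd`). As `s k` is the smallest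
diagonal entry of `Σ` and `V` is unitary, this gives `‖SAu‖ ≥ s k` for every unit
vector `u`; and `v₀` is a multiple of `V e_k` of norm at most one, so `‖SAv₀‖ ≤ s k`. With `u` a
unit vector attaining `σ_min(A)`, the two sides of the embedding inequality yield
`(1-η)‖Av₀‖² ≤ ‖SAv₀‖² ≤ (s k)² ≤ ‖SAu‖² ≤ (1+η) σ_min(A)²`.
-/

open Matrix

/-- The linear action of a complex matrix on Euclidean space: `mulE A v = A v`. -/
noncomputable def mulE {m n : ℕ} (A : Matrix (Fin m) (Fin n) ℂ)
    (v : EuclideanSpace ℂ (Fin n)) : EuclideanSpace ℂ (Fin m) :=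
  Matrix.toEuclideanLin A v

/-- `S` is a subspace embedding for `A` with distortion `η`:
`(1-η)‖Ay‖² ≤ ‖SAy‖² ≤ (1+η)‖Ay‖²` for all `y`. -/
def IsSubspaceEmbedding {d m n : ℕ} (S : Matrix (Fin d) (Fin m) ℂ)
    (A : Matrix (Fin m) (Fin n) ℂ) (η : ℝ) : Prop :=
  ∀ y : EuclideanSpace ℂ (Fin n),
    (1 - η) * ‖mulE A y‖ ^ 2 ≤ ‖mulE (S * A) y‖ ^ 2 ∧
      ‖mulE (S * A) y‖ ^ 2 ≤ (1 + η) * ‖mulE A y‖ ^ 2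

/-- `σ` lists the singular values of `A` in decreasing order: `σ` is antitone, nonnegative,
and there is an orthonormal (eigen)basis `B` with `AᴴA (B i) = σᵢ² • B i`. -/
def HasSingularValues {m n : ℕ} (A : Matrix (Fin m) (Fin n) ℂ) (σ : Fin n → ℝ) : Prop :=
  Antitone σ ∧ (∀ i, 0 ≤ σ i) ∧
    ∃ B : Fin n → EuclideanSpace ℂ (Fin n), Orthonormal ℂ B ∧
      ∀ i, mulE (Aᴴ * A) (B i) = ((σ i ^ 2 : ℝ) : ℂ) • B i

/-- The spectral norm (largest singular value) of a matrix, as the operator norm of its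
action between Euclidean spaces. -/
noncomputable def specNorm {m n : ℕ} (A : Matrix (Fin m) (Fin n) ℂ) : ℝ :=
  ‖LinearMap.toContinuousLinearMap (Matrix.toEuclideanLin A)‖

lemma mulE_mul {l m n : ℕ} (A : Matrix (Fin l) (Fin m) ℂ) (B : Matrix (Fin m) (Fin n) ℂ)
    (v : EuclideanSpace ℂ (Fin n)) : mulE (A * B) v = mulE A (mulE B v) := by
  simp [mulE, Matrix.toLpLin_apply, Matrix.mulVec_mulVec]

lemma mulE_smul {m n : ℕ} (A : Matrix (Fin m) (Fin n) ℂ) (c : ℂ)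
    (v : EuclideanSpace ℂ (Fin n)) : mulE A (c • v) = c • mulE A v := by
  simp [mulE]

lemma mulE_one {n : ℕ} (v : EuclideanSpace ℂ (Fin n)) : mulE 1 v = v := by
  simp [mulE]

lemma mulE_diagonal_apply {n : ℕ} (t : Fin n → ℂ) (v : EuclideanSpace ℂ (Fin n)) (i : Fin n) :
    mulE (Matrix.diagonal t) v i = t i * v i := by
  simp [mulE, Matrix.toLpLin_apply, Matrix.mulVec_diagonal]

lemma norm_mulE_of_isometry {m n : ℕ} (M : Matrix (Fin m) (Fin n) ℂ) (hM : Mᴴ * M = 1)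
    (v : EuclideanSpace ℂ (Fin n)) : ‖mulE M v‖ = ‖v‖ := by
  have h : inner ℂ (mulE M v) (mulE M v) = inner ℂ v v := by
    have hadj : inner ℂ (mulE M v) (mulE M v) = inner ℂ v (mulE Mᴴ (mulE M v)) := by
      simp only [mulE, Matrix.toEuclideanLin_conjTranspose_eq_adjoint]
      rw [LinearMap.adjoint_inner_right]
    rw [hadj, ← mulE_mul, hM, mulE_one]
  rw [inner_self_eq_norm_sq_to_K, inner_self_eq_norm_sq_to_K] at h
  have h2 : ‖mulE M v‖ ^ 2 = ‖v‖ ^ 2 := by exact_mod_cast h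
  exact (sq_eq_sq₀ (norm_nonneg _) (norm_nonneg _)).mp h2

lemma norm_mulE_svd {d n : ℕ} (U : Matrix (Fin d) (Fin n) ℂ) (V D : Matrix (Fin n) (Fin n) ℂ)
    (hU : Uᴴ * U = 1) (u : EuclideanSpace ℂ (Fin n)) :
    ‖mulE (U * D * Vᴴ) u‖ = ‖mulE D (mulE Vᴴ u)‖ := by
  rw [mulE_mul, mulE_mul, norm_mulE_of_isometry U hU]

lemma mulE_diagonal_single {n : ℕ} (t : Fin n → ℂ) (k : Fin n) :
    mulE (Matrix.diagonal t) (EuclideanSpace.single k 1) = t k • EuclideanSpace.single k 1 := by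
  ext i
  rw [mulE_diagonal_apply]
  by_cases h : i = k
  · subst h; simp
  · simp [h]

lemma le_norm_mulE_diagonal {n : ℕ} (s : Fin n → ℝ) (c : ℝ) (hc : 0 ≤ c) (hs : ∀ i, c ≤ s i)
    (z : EuclideanSpace ℂ (Fin n)) :
    c ^ 2 * ‖z‖ ^ 2 ≤ ‖mulE (Matrix.diagonal (fun i => (s i : ℂ))) z‖ ^ 2 := by
  rw [EuclideanSpace.norm_sq_eq, EuclideanSpace.norm_sq_eq, Finset.mul_sum]
  refine Finset.sum_le_sum fun i _ => ?_
  rw [mulE_diagonal_apply, norm_mul, mul_pow, Complex.norm_real, Real.norm_eq_abs, sq_abs]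
  have := hs i
  gcongr

/-- Sketch-and-solve initialization, Fact 3.2: with `P := VΣ⁻¹` built from an
SVD `SA = UΣVᴴ` (singular values sorted decreasingly) and `v₀ := P eₙ / ‖P eₙ‖`, one has
`‖A v₀‖² ≤ ((1+η)/(1−η))·σ_min(A)²`, where `σ_min(A)` is the smallest singular value of `A`,
characterized as the least value of `‖Au‖` over unit vectors `u`. -/
theorem sketch_and_solve_min_singular_vector
    {d m n : ℕ} (hn : 0 < n)
    (A : Matrix (Fin m) (Fin n) ℂ)
    (hrank : Function.Injective (mulE A))
    (S : Matrix (Fin d) (Fin m) ℂ) (η : ℝ) (hη0 : 0 ≤ η) (hη1 : η < 1)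
    (hS : IsSubspaceEmbedding S A η)
    (U : Matrix (Fin d) (Fin n) ℂ) (V : Matrix (Fin n) (Fin n) ℂ) (s : Fin n → ℝ)
    (hU : Uᴴ * U = 1) (hV : Vᴴ * V = 1) (hs0 : ∀ i, 0 ≤ s i) (hsa : Antitone s)
    (hSVD : S * A = U * Matrix.diagonal (fun i => (s i : ℂ)) * Vᴴ)
    (P : Matrix (Fin n) (Fin n) ℂ)
    (hP : P = V * Matrix.diagonal (fun i => ((s i : ℂ))⁻¹))
    (e : EuclideanSpace ℂ (Fin n))
    (he : e = EuclideanSpace.single ⟨n - 1, by omega⟩ (1 : ℂ))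
    (v0 : EuclideanSpace ℂ (Fin n))
    (hv0 : v0 = ‖mulE P e‖⁻¹ • mulE P e)
    (σmin : ℝ)
    (hσmin : IsLeast {r : ℝ | ∃ u : EuclideanSpace ℂ (Fin n), ‖u‖ = 1 ∧ r = ‖mulE A u‖} σmin) :
    ‖mulE A v0‖ ^ 2 ≤ (1 + η) / (1 - η) * σmin ^ 2 := by
  set k : Fin n := ⟨n - 1, by omega⟩ with hk
  have hmin : ∀ i, s k ≤ s i := fun i => hsa (Fin.mk_le_mk.mpr (by omega) : i ≤ k)
  obtain ⟨⟨u, hu, rfl⟩, -⟩ := hσmin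
  have hV' : Vᴴᴴ * Vᴴ = 1 := by
    rw [Matrix.conjTranspose_conjTranspose]; exact mul_eq_one_comm.mp hV
  have hlow : s k ^ 2 ≤ ‖mulE (S * A) u‖ ^ 2 := by
    have h := le_norm_mulE_diagonal s (s k) (hs0 k) hmin (mulE Vᴴ u)
    rw [norm_mulE_of_isometry Vᴴ hV', hu] at h
    rw [hSVD, norm_mulE_svd U V _ hU]
    simpa using h
  -- An inequality suffices, so `P e ≠ 0` is not needed: if `P e = 0`, then `v0 = 0`.
  have hv0n : ‖v0‖ ≤ 1 := by
    rw [hv0, norm_smul, norm_inv, norm_norm]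
    exact inv_mul_le_one
  obtain ⟨c, hc⟩ : ∃ c : ℂ, mulE Vᴴ v0 = c • EuclideanSpace.single k (1 : ℂ) := by
    refine ⟨((‖mulE P e‖⁻¹ : ℝ) : ℂ) * (s k : ℂ)⁻¹, ?_⟩
    have hPe : mulE P e = (s k : ℂ)⁻¹ • mulE V (EuclideanSpace.single k 1) := by
      rw [hP, he, mulE_mul, mulE_diagonal_single, mulE_smul]
    have hv : v0 = ((‖mulE P e‖⁻¹ : ℝ) : ℂ) • mulE P e := by
      rw [hv0, Complex.coe_smul]
    rw [hv, mulE_smul, hPe, mulE_smul, ← mulE_mul, hV, mulE_one, smul_smul]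
  have hup : ‖mulE (S * A) v0‖ ^ 2 ≤ s k ^ 2 := by
    have hz : ‖c • EuclideanSpace.single k (1 : ℂ)‖ ≤ 1 := by
      rw [← hc, norm_mulE_of_isometry Vᴴ hV']; exact hv0n
    rw [hSVD, norm_mulE_svd U V _ hU, hc, mulE_smul, mulE_diagonal_single, smul_comm, norm_smul,
      Complex.norm_real, Real.norm_of_nonneg (hs0 k)]
    have := mul_le_mul_of_nonneg_left hz (hs0 k)
    rw [mul_one] at this
    have h0 := hs0 k
    gcongr
  have h1 := (hS v0).1
  have h2 := (hS u).2
  rw [div_mul_eq_mul_div, le_div_iff₀ (by linarith)]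
  linarith
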